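/- Let ω ∈ ℝ^d be Diophantine with parameters c > 0 and τ > d−1, i.e. |ω·k| ≥ c/|k|^τ for all nonzero k ∈ ℤ^d. Let g be real analytic on the torus 𝕋^d with zero average, admitting a bounded holomorphic extension to the complex strip {|Im z| ≤ Δ}. Then for every 0 < δ < Δ there exists a unique zero-average function f, holomorphic on the strip {|Im z| ≤ Δ−δ}, such that Σ_{i=1}^d ω_i ∂f/∂θ_i = g. -/

import Mathlib

open MeasureTheory Real Complex

noncomputable section

/-- The complex strip `A_Δ = {z ∈ ℂ^d : |Im z| ≤ Δ}` (sup norm on the imaginary part). -/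
def strip (d : ℕ) (Δ : ℝ) : Set (Fin d → ℂ) := {z | ∀ i, |(z i).im| ≤ Δ}

/-- `2π`-periodicity in each real direction. -/
def Per (d : ℕ) (f : (Fin d → ℂ) → ℂ) : Prop :=
  ∀ z : Fin d → ℂ, ∀ k : Fin d → ℤ, f (z + fun i => 2 * π * (k i : ℂ)) = f z

/-- Zero average over the torus `[0,2π]^d`. -/
def ZeroAvg (d : ℕ) (f : (Fin d → ℂ) → ℂ) : Prop :=
  (∫ θ in Set.Icc (0 : Fin d → ℝ) (fun _ => 2 * π), f (fun i => (θ i : ℂ))) = 0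

/-- `f` is a zero-average holomorphic periodic solution of `L_ω f = g` on the strip of width `Δ'`. -/
def IsSol (d : ℕ) (Δ' : ℝ) (ω : Fin d → ℝ) (g f : (Fin d → ℂ) → ℂ) : Prop :=
  (∀ z ∈ strip d Δ', DifferentiableAt ℂ f z) ∧ Per d f ∧ ZeroAvg d f ∧
  ∀ z ∈ strip d Δ', fderiv ℂ f z (fun i => (ω i : ℂ)) = g z

abbrev Tor (d : ℕ) := UnitAddTorus (Fin d)

abbrev muT (d : ℕ) : Measure (Tor d) := Measure.pi fun _ => AddCircle.haarAddCircle

def qmap {d : ℕ} (s : Fin d → ℝ) : Tor d := fun i => (s i : UnitAddCircle)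

def rep {d : ℕ} (x : Tor d) : Fin d → ℝ := fun i => (AddCircle.equivIoc 1 0 (x i)).1

def expk {d : ℕ} (k : Fin d → ℤ) (z : Fin d → ℂ) : ℂ := cexp (I * ∑ i, (k i : ℂ) * z i)

def Lf {d : ℕ} (H : (Fin d → ℂ) → ℂ) (z : Fin d → ℂ) (x : Tor d) : ℂ :=
  H (fun i => 2 * π * (rep x i : ℂ) + z i)

lemma qmap_rep {d : ℕ} (x : Tor d) : qmap (rep x) = x := by
  funext i
  exact (AddCircle.equivIoc 1 0).symm_apply_apply (x i)

lemma rep_qmap {d : ℕ} (s : Fin d → ℝ) : ∃ k : Fin d → ℤ, ∀ i, rep (qmap s) i = s i + k i := by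
  have h : ∀ i, ∃ k : ℤ, rep (qmap s) i = s i + k := by
    intro i
    have h1 : ((rep (qmap s) i : ℝ) : UnitAddCircle) = (s i : UnitAddCircle) :=
      congrFun (qmap_rep (qmap s)) i
    have h2 : ((rep (qmap s) i - s i : ℝ) : UnitAddCircle) = 0 := by
      rw [AddCircle.coe_sub, h1, sub_self]
    obtain ⟨n, hn⟩ := (AddCircle.coe_eq_zero_iff (1 : ℝ)).1 h2
    refine ⟨n, ?_⟩
    simp at hn
    linarith
  choose k hk using h
  exact ⟨k, hk⟩

lemma Lf_qmap {d : ℕ} {H : (Fin d → ℂ) → ℂ} (hH : Per d H) (z : Fin d → ℂ) (s : Fin d → ℝ) :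
    Lf H z (qmap s) = H (fun i => 2 * π * (s i : ℂ) + z i) := by
  obtain ⟨k, hk⟩ := rep_qmap s
  rw [← hH (fun i => 2 * π * (s i : ℂ) + z i) k]
  unfold Lf
  congr 1
  funext i
  simp only [hk, Pi.add_apply]
  push_cast
  ring

lemma Lf_add {d : ℕ} {H : (Fin d → ℂ) → ℂ} (hH : Per d H) (z : Fin d → ℂ) (s : Fin d → ℝ)
    (x : Tor d) : Lf H z (x + qmap s) = Lf H (fun i => 2 * π * (s i : ℂ) + z i) x := by
  have h : x + qmap s = qmap (rep x + s) := by
    conv_lhs => rw [← qmap_rep x]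
    funext i
    simp [qmap]
  rw [h, Lf_qmap hH]
  unfold Lf
  congr 1
  funext i
  simp only [Pi.add_apply]
  push_cast
  ring

lemma mFourier_qmap {d : ℕ} (k : Fin d → ℤ) (s : Fin d → ℝ) :
    UnitAddTorus.mFourier k (qmap s) = expk k (fun i => 2 * π * (s i : ℂ)) := by
  simp only [UnitAddTorus.mFourier, ContinuousMap.coe_mk, qmap, fourier_coe_apply, expk]
  rw [← Complex.exp_sum, Finset.mul_sum]
  congr 1
  apply Finset.sum_congr rfl
  intro i _
  push_cast
  ring

lemma expk_per {d : ℕ} (k : Fin d → ℤ) : Per d (expk k) := by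
  intro z m
  unfold expk
  rw [Complex.exp_eq_exp_iff_exists_int]
  refine ⟨∑ i, k i * m i, ?_⟩
  push_cast
  simp only [Pi.add_apply, mul_add, Finset.sum_add_distrib, Finset.mul_sum, Finset.sum_mul]
  congr 1
  apply Finset.sum_congr rfl
  intro i _
  ring

lemma mFourier_eq {d : ℕ} (k : Fin d → ℤ) (x : Tor d) :
    UnitAddTorus.mFourier k x = expk k (fun i => 2 * π * (rep x i : ℂ)) := by
  rw [← mFourier_qmap, qmap_rep]

lemma isOpenQuotientMap_qmap {d : ℕ} : IsOpenQuotientMap (qmap : (Fin d → ℝ) → Tor d) :=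
  IsOpenQuotientMap.piMap (f := fun _ : Fin d => ((↑) : ℝ → UnitAddCircle))
    (fun _ => QuotientAddGroup.isOpenQuotientMap_mk)

lemma strip_add_real {d : ℕ} {D : ℝ} {z : Fin d → ℂ} (hz : z ∈ strip d D) (s : Fin d → ℝ) :
    (fun i => 2 * π * (s i : ℂ) + z i) ∈ strip d D := by
  intro i
  have := hz i
  simpa using this

lemma strip_convex {d : ℕ} {D : ℝ} : Convex ℝ (strip d D) := by
  have : strip d D = ⋂ i, {z : Fin d → ℂ | (z i).im ∈ Set.Icc (-D) D} := by
    ext z; simp [strip, abs_le]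
  rw [this]
  refine convex_iInter fun i => ?_
  exact (convex_Icc (-D) D).linear_preimage
    (Complex.imLm.comp (LinearMap.proj (R := ℝ) (φ := fun _ : Fin d => ℂ) i))

lemma Lf_continuous {d : ℕ} {D : ℝ} {H : (Fin d → ℂ) → ℂ} (hH : Per d H)
    (hc : ∀ z ∈ strip d D, ContinuousAt H z) {z : Fin d → ℂ} (hz : z ∈ strip d D) :
    Continuous (Lf H z) := by
  rw [isOpenQuotientMap_qmap.isQuotientMap.continuous_iff]
  have h1 : Lf H z ∘ qmap = fun s : Fin d → ℝ => H (fun i => 2 * π * (s i : ℂ) + z i) := by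
    funext s
    exact Lf_qmap hH z s
  rw [h1, continuous_iff_continuousAt]
  intro s
  refine ContinuousAt.comp (f := fun s : Fin d → ℝ => fun i => 2 * π * (s i : ℂ) + z i)
    (hc _ (strip_add_real hz s)) ?_
  refine Continuous.continuousAt (continuous_pi fun i => ?_)
  exact (continuous_const.mul (Complex.continuous_ofReal.comp (continuous_apply i))).add
    continuous_const

lemma rep_measurable {d : ℕ} : Measurable (rep : Tor d → Fin d → ℝ) := by
  refine measurable_pi_lambda _ fun i => ?_
  exact measurable_subtype_coe.comp
    ((AddCircle.measurableEquivIoc 1 0).measurable.comp (measurable_pi_apply i))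

/-- functions invariant under real translations are constant -/
lemma const_of_invariant {d : ℕ} {D : ℝ} {v : (Fin d → ℂ) → ℂ}
    (hv : ∀ z ∈ strip d D, DifferentiableAt ℂ v z)
    (hi : ∀ z ∈ strip d D, ∀ s : Fin d → ℝ, v (fun i => 2 * π * (s i : ℂ) + z i) = v z) :
    ∀ z ∈ strip d D, ∀ w ∈ strip d D, v z = v w := by
  have h0 : ∀ z ∈ strip d D, fderiv ℂ v z = 0 := by
    intro z hz
    have h1 : ∀ j : Fin d, fderiv ℂ v z (Pi.single j 1) = 0 := by
      intro j
      have h2 : HasDerivAt (fun t : ℝ => v (z + (t : ℂ) • (Pi.single j 1 : Fin d → ℂ)))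
          (fderiv ℂ v z (Pi.single j 1)) 0 := by
        have h3 : HasDerivAt (fun t : ℂ => v (z + t • (Pi.single j 1 : Fin d → ℂ)))
            (fderiv ℂ v z (Pi.single j 1)) 0 :=
          (hv z hz).hasFDerivAt.hasLineDerivAt _
        exact HasDerivAt.comp_ofReal (z := 0) (by simpa using h3)
      have h4 : (fun t : ℝ => v (z + (t : ℂ) • (Pi.single j 1 : Fin d → ℂ))) = fun _ => v z := by
        funext t
        rw [← hi z hz (Pi.single j (t / (2 * π)))]
        congr 1
        funext i
        by_cases h : i = j
        · subst h
          have : (π : ℂ) ≠ 0 := by exact_mod_cast Real.pi_ne_zero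
          simp
          field_simp
          ring
        · simp [h]
      rw [h4] at h2
      exact h2.unique (hasDerivAt_const _ _)
    apply ContinuousLinearMap.coe_injective
    exact LinearMap.pi_ext' fun j => LinearMap.ext_ring (h1 j)
  intro z hz w hw
  · have := strip_convex (d := d) (D := D) |>.norm_image_sub_le_of_norm_hasFDerivWithin_le (𝕜 := ℂ)
      (f := v) (f' := fun _ => 0) (C := 0) (fun x hx => by
        have := (hv x hx).hasFDerivAt; rw [h0 x hx] at this; exact this.hasFDerivWithinAt)
      (by simp) hz hw
    simp at this
    exact (sub_eq_zero.mp this).symm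
lemma integral_Lf {d : ℕ} {H : (Fin d → ℂ) → ℂ} (hH : Per d H) (h0 : ZeroAvg d H) :
    ∫ x, Lf H 0 x ∂(muT d) = 0 := by
  have h1 := UnitAddTorus.integral_preimage (d := Fin d) (Lf H 0) 0
  refine Eq.trans h1 ?_
  have h2 : ∀ s : Fin d → ℝ, Lf H 0 (fun i => (s i : UnitAddCircle)) =
      H (fun i => ((((2 * π) • s : Fin d → ℝ) i : ℝ) : ℂ)) := by
    intro s
    refine (Lf_qmap hH 0 s).trans ?_
    congr 1
    funext i
    simp
  simp_rw [h2]
  have hpi : 0 < 2 * π := by positivity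
  rw [MeasureTheory.Measure.setIntegral_comp_smul_of_pos volume
    (fun s : Fin d → ℝ => H (fun i => ((s i : ℝ) : ℂ))) _ hpi]
  unfold ZeroAvg at h0
  open scoped Pointwise in
  have h3 : (2 * π) • {x : Fin d → ℝ | ∀ i, x i ∈ Set.Ioc ((0 : Fin d → ℝ) i) ((0 : Fin d → ℝ) i + 1)}
      = Set.univ.pi fun _ : Fin d => Set.Ioc 0 (2 * π) := by
    ext x
    rw [Set.mem_smul_set_iff_inv_smul_mem₀ hpi.ne']
    simp only [Set.mem_ofPred_eq, Set.mem_pi, Set.mem_univ, true_imp_iff, Set.mem_Ioc,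
      Pi.smul_apply, smul_eq_mul, Pi.zero_apply, zero_add]
    refine forall_congr' fun i => ?_
    rw [inv_mul_le_iff₀ hpi, mul_one, mul_pos_iff_of_pos_left (inv_pos.2 hpi)]
  rw [h3]
  have h4 := Measure.univ_pi_Ioc_ae_eq_Icc (μ := fun _ : Fin d => (volume : Measure ℝ))
     (f := (0 : Fin d → ℝ)) (g := fun _ => 2 * π)
  have h5 := setIntegral_congr_set (f := fun s : Fin d → ℝ => H (fun i => ((s i : ℝ) : ℂ))) h4
  have h6 : (∫ s in Set.univ.pi fun _ : Fin d => Set.Ioc 0 (2 * π), H (fun i => ((s i : ℝ) : ℂ)))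
    = 0 := h5.trans h0
  rw [h6, smul_zero]

lemma expk_norm {d : ℕ} (k : Fin d → ℤ) (z : Fin d → ℂ) :
    ‖expk k z‖ = Real.exp (-∑ i, (k i : ℝ) * (z i).im) := by
  unfold expk
  rw [Complex.norm_exp]
  simp [Complex.re_sum, Complex.im_sum]

lemma expk_norm_le {d : ℕ} {D : ℝ} (k : Fin d → ℤ) {z : Fin d → ℂ} (hz : z ∈ strip d D) :
    ‖expk k z‖ ≤ Real.exp (D * ∑ i, |(k i : ℝ)|) := by
  rw [expk_norm, Real.exp_le_exp, ← Finset.sum_neg_distrib, Finset.mul_sum]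
  apply Finset.sum_le_sum
  intro i _
  calc -((k i : ℝ) * (z i).im) ≤ |(k i : ℝ) * (z i).im| := neg_le_abs _
    _ = |(z i).im| * |(k i : ℝ)| := by rw [abs_mul, mul_comm]
    _ ≤ _ := mul_le_mul_of_nonneg_right (hz i) (abs_nonneg _)

lemma expk_add {d : ℕ} (k : Fin d → ℤ) (z w : Fin d → ℂ) :
    expk k (fun i => z i + w i) = expk k z * expk k w := by
  unfold expk
  rw [← Complex.exp_add]
  simp only [mul_add, Finset.sum_add_distrib]

lemma expk_neg {d : ℕ} (k : Fin d → ℤ) (z : Fin d → ℂ) :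
    expk k z * expk (-k) z = 1 := by
  unfold expk
  rw [← Complex.exp_add]
  simp

/-- the linear form `z ↦ i k·z` -/
def linK {d : ℕ} (k : Fin d → ℤ) : (Fin d → ℂ) →L[ℂ] ℂ :=
  I • ∑ i, (k i : ℂ) • (ContinuousLinearMap.proj i : (Fin d → ℂ) →L[ℂ] ℂ)

lemma linK_apply {d : ℕ} (k : Fin d → ℤ) (z : Fin d → ℂ) :
    linK k z = I * ∑ i, (k i : ℂ) * z i := by
  simp [linK]

lemma expk_hasFDerivAt {d : ℕ} (k : Fin d → ℤ) (z : Fin d → ℂ) :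
    HasFDerivAt (expk k) (expk k z • linK k) z := by
  have h : expk k = fun z => cexp (linK k z) := by
    funext z
    rw [linK_apply]
    rfl
  rw [h]
  exact (linK k).hasFDerivAt.cexp

lemma ball_strip {d : ℕ} {D1 D : ℝ} {z w : Fin d → ℂ} (hz : z ∈ strip d D1)
    (hw : w ∈ Metric.ball z (D - D1)) : w ∈ strip d D := by
  intro i
  have h1 : ‖w i - z i‖ ≤ D - D1 := by
    have := (norm_le_pi_norm (w - z) i)
    rw [Metric.mem_ball, dist_eq_norm] at hw
    exact this.trans hw.le
  have h2 := (Complex.abs_im_le_norm (w i - z i)).trans h1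
  have h3 := hz i
  rw [Complex.sub_im] at h2
  rw [abs_le] at *
  constructor <;> linarith [h2.1, h2.2, h3.1, h3.2]

lemma int_diff {d : ℕ} {D D1 M : ℝ} {h : (Fin d → ℂ) → ℂ} (hD : D1 < D) (hper : Per d h)
    (hh : ∀ z ∈ strip d D, DifferentiableAt ℂ h z) (hM : ∀ z ∈ strip d D, ‖h z‖ ≤ M)
    {z : Fin d → ℂ} (hz : z ∈ strip d D1) :
    DifferentiableAt ℂ (fun z => ∫ x, Lf h z x ∂(muT d)) z := by
  set r := (D - D1) / 2 with hr
  have hr0 : 0 < r := by rw [hr]; linarith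
  have hball : ∀ w ∈ Metric.ball z r, w ∈ strip d (D1 + r) := fun w hw =>
    ball_strip hz (by simpa using hw)
  have hsub : ∀ w ∈ Metric.ball z r, w ∈ strip d D := fun w hw i =>
    (hball w hw i).trans (by rw [hr]; linarith)
  have hcont : ∀ w ∈ Metric.ball z r, Continuous (Lf h w) := fun w hw =>
    Lf_continuous hper (fun z hz => (hh z hz).continuousAt) (hsub w hw)
  have hmeas : Measurable fun x : Tor d => (fun i => 2 * π * (rep x i : ℂ) + z i) := by
    refine measurable_pi_lambda _ fun i => ?_
    have := (measurable_pi_apply i).comp (rep_measurable (d := d))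
    exact ((Complex.measurable_ofReal.comp this).const_mul _).add_const _
  have key := hasFDerivAt_integral_of_dominated_of_fderiv_le (𝕜 := ℂ) (μ := muT d)
    (F := fun z x => Lf h z x) (x₀ := z) (s := Metric.ball z r)
    (F' := fun z x => fderiv ℂ h (fun i => 2 * π * (rep x i : ℂ) + z i))
    (bound := fun _ => 2 * M / r) (Metric.ball_mem_nhds z hr0)
    (by filter_upwards [Metric.ball_mem_nhds z hr0] with w hw
        exact (hcont w hw).aestronglyMeasurable)
    ((hcont z (Metric.mem_ball_self hr0)).integrable_of_hasCompactSupport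
      (HasCompactSupport.of_compactSpace _))
    (((measurable_fderiv ℂ h).comp hmeas).aestronglyMeasurable)
    (by
      refine Filter.Eventually.of_forall fun x w hw => ?_
      set p : Fin d → ℂ := fun i => 2 * π * (rep x i : ℂ) + w i with hp
      have hp1 : p ∈ strip d (D1 + r) := strip_add_real (hball w hw) _
      have hb : ∀ q ∈ Metric.ball p r, q ∈ strip d D := fun q hq =>
        ball_strip hp1 (by convert hq using 2; rw [hr]; ring)
      refine Complex.norm_fderiv_le_div_of_mapsTo_ball (R₁ := r)
        (fun q hq => (hh q (hb q hq)).differentiableWithinAt) ?_ hr0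
      intro q hq
      rw [Metric.mem_closedBall, dist_eq_norm]
      refine (norm_sub_le _ _).trans ?_
      linarith [hM q (hb q hq), hM p (hb p (Metric.mem_ball_self hr0))])
    (integrable_const _)
    (by
      refine Filter.Eventually.of_forall fun x w hw => ?_
      have h1 := (hh _ (strip_add_real (hsub w hw) (rep x))).hasFDerivAt
      have h2 : HasFDerivAt (fun w : Fin d → ℂ => fun i => 2 * π * (rep x i : ℂ) + w i)
        (ContinuousLinearMap.id ℂ (Fin d → ℂ)) w :=
        (hasFDerivAt_id w).const_add (fun i => 2 * π * (rep x i : ℂ))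
      simpa using! HasFDerivAt.comp w h1 h2)
  exact key.differentiableAt

abbrev cf {d : ℕ} (g : (Fin d → ℂ) → ℂ) (z : Fin d → ℂ) (k : Fin d → ℤ) : ℂ :=
  UnitAddTorus.mFourierCoeff (Lf g z) k

lemma cf_eq {d : ℕ} (g : (Fin d → ℂ) → ℂ) (z : Fin d → ℂ) (k : Fin d → ℤ) :
    cf g z k = ∫ x, UnitAddTorus.mFourier (-k) x * Lf g z x ∂(muT d) := rfl

lemma cf_eq' {d : ℕ} (g : (Fin d → ℂ) → ℂ) (z : Fin d → ℂ) (k : Fin d → ℤ) :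
    cf g z k = expk k z * ∫ x, Lf (fun z => expk (-k) z * g z) z x ∂(muT d) := by
  rw [cf_eq, ← integral_const_mul]
  congr 1
  funext x
  simp only [Lf]
  rw [expk_add, mFourier_eq]
  linear_combination (-expk (-k) (fun i => 2 * π * (rep x i : ℂ)) *
    g (fun i => 2 * π * (rep x i : ℂ) + z i)) * expk_neg k z

lemma zero_strip {d : ℕ} {D : ℝ} (hD : 0 ≤ D) : (0 : Fin d → ℂ) ∈ strip d D := by
  intro i; simpa using hD

lemma cf_shift {d : ℕ} {D D1 M : ℝ} {g : (Fin d → ℂ) → ℂ} (hD0 : 0 ≤ D1) (hD : D1 < D)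
    (hper : Per d g) (hh : ∀ z ∈ strip d D, DifferentiableAt ℂ g z)
    (hM : ∀ z ∈ strip d D, ‖g z‖ ≤ M) (k : Fin d → ℤ) {z : Fin d → ℂ} (hz : z ∈ strip d D1) :
    cf g z k = expk k z * cf g 0 k := by
  rw [cf_eq', cf_eq' g 0]
  have hper' : Per d (fun z => expk (-k) z * g z) := by
    intro z m
    simp only [hper z m, expk_per (-k) z m]
  have hdiff := fun z (hz : z ∈ strip d D1) => int_diff (h := fun z => expk (-k) z * g z)
    (M := Real.exp (D * ∑ i, |(((-k) i : ℤ) : ℝ)|) * M) hD hper'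
    (fun z hz => (expk_hasFDerivAt (-k) z).differentiableAt.mul (hh z hz))
    (fun z hz => by
      rw [norm_mul]
      exact mul_le_mul (expk_norm_le (-k) hz) (hM z hz) (norm_nonneg _) (Real.exp_pos _).le) hz
  have := const_of_invariant hdiff (fun z hz s => by
    simp_rw [← Lf_add hper']
    exact integral_add_right_eq_self (μ := muT d) (Lf (fun z => expk (-k) z * g z) z) (qmap s))
    z hz 0 (zero_strip hD0)
  rw [this]
  simp [expk]

lemma cf_norm_le {d : ℕ} {D M : ℝ} {g : (Fin d → ℂ) → ℂ}
    (hM : ∀ z ∈ strip d D, ‖g z‖ ≤ M) (k : Fin d → ℤ) {z : Fin d → ℂ} (hz : z ∈ strip d D) :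
    ‖cf g z k‖ ≤ M := by
  rw [cf_eq]
  have := norm_integral_le_of_norm_le_const (μ := muT d) (C := M)
    (f := fun x => UnitAddTorus.mFourier (-k) x * Lf g z x) (Filter.Eventually.of_forall fun x => by
      rw [norm_mul]
      have h1 : ‖UnitAddTorus.mFourier (-k) x‖ ≤ 1 := by
        exact (ContinuousMap.norm_coe_le_norm _ x).trans (UnitAddTorus.mFourier_norm (n := -k)).le
      have h2 : ‖Lf g z x‖ ≤ M := hM _ (strip_add_real hz _)
      calc _ ≤ 1 * ‖Lf g z x‖ := mul_le_mul_of_nonneg_right h1 (norm_nonneg _)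
        _ ≤ M := by simpa using h2)
  simpa using this

lemma cf_decay {d : ℕ} {D D1 M : ℝ} {g : (Fin d → ℂ) → ℂ} (hD0 : 0 ≤ D1) (hD : D1 < D)
    (hper : Per d g) (hh : ∀ z ∈ strip d D, DifferentiableAt ℂ g z)
    (hM : ∀ z ∈ strip d D, ‖g z‖ ≤ M) (k : Fin d → ℤ) :
    ‖cf g 0 k‖ ≤ M * Real.exp (-(D1 * ∑ i, |(k i : ℝ)|)) := by
  set z : Fin d → ℂ := fun i => ((-(D1 * SignType.sign (k i : ℝ)) : ℝ) : ℂ) * I with hzdef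
  have hz : z ∈ strip d D1 := by
    intro i
    simp only [hzdef, Complex.im_ofReal_mul, Complex.I_im, mul_one, abs_neg, abs_mul, abs_of_nonneg hD0]
    refine mul_le_of_le_one_right hD0 ?_
    cases SignType.sign (k i : ℝ) <;> simp
  have h1 := cf_shift hD0 hD hper hh hM k hz
  have h2 := cf_norm_le hM k (z := z) (fun i => (hz i).trans hD.le)
  rw [h1, norm_mul, expk_norm] at h2
  have h3 : -∑ i, (k i : ℝ) * (z i).im = D1 * ∑ i, |(k i : ℝ)| := by
    rw [Finset.mul_sum, ← Finset.sum_neg_distrib]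
    apply Finset.sum_congr rfl
    intro i _
    simp only [hzdef, Complex.im_ofReal_mul, Complex.I_im, mul_one]
    rw [← self_mul_sign (k i : ℝ)]
    ring
  rw [h3] at h2
  rw [Real.exp_neg, ← div_eq_mul_inv, le_div_iff₀ (Real.exp_pos _)]
  linarith

lemma summable_pi_exp (e : ℝ) (he : 0 < e) : ∀ d : ℕ,
    Summable fun k : Fin d → ℤ => Real.exp (-(e * ∑ i, |(k i : ℝ)|)) := by
  intro d
  induction d with
  | zero => exact Summable.of_finite
  | succ n ih =>
    rw [← (Fin.consEquiv (fun _ => ℤ)).summable_iff]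
    have h1 : Summable fun m : ℤ => Real.exp (-(e * |(m : ℝ)|)) := by
      have h2 : Summable fun m : ℕ => Real.exp (-(e * (m : ℝ))) := by
        have := Real.summable_exp_nat_mul_iff.2 (neg_lt_zero.2 he)
        refine this.congr fun m => ?_
        ring_nf
      refine Summable.of_nat_of_neg ?_ ?_ <;> simpa using h2
    have h3 := h1.mul_of_nonneg ih (fun _ => (Real.exp_pos _).le) (fun _ => (Real.exp_pos _).le)
    refine h3.congr fun p => ?_
    rw [← Real.exp_add]
    simp [Fin.consEquiv, Fin.sum_univ_succ]
    ring

lemma cf_bound {d : ℕ} {D D1 D2 M : ℝ} {g : (Fin d → ℂ) → ℂ} (hD0 : 0 ≤ D1) (hD : D1 < D)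
    (hper : Per d g) (hh : ∀ z ∈ strip d D, DifferentiableAt ℂ g z)
    (hM : ∀ z ∈ strip d D, ‖g z‖ ≤ M) (k : Fin d → ℤ) {z : Fin d → ℂ} (hz : z ∈ strip d D2) :
    ‖cf g 0 k‖ * ‖expk k z‖ ≤ M * Real.exp (-((D1 - D2) * ∑ i, |(k i : ℝ)|)) := by
  have h1 := mul_le_mul (cf_decay hD0 hD hper hh hM k) (expk_norm_le k hz) (norm_nonneg _)
    ((norm_nonneg _).trans (cf_decay hD0 hD hper hh hM k))
  refine h1.trans (le_of_eq ?_)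
  rw [mul_assoc, ← Real.exp_add]
  congr 2
  ring

lemma hasSum_of_cf {d : ℕ} {D : ℝ} {g : (Fin d → ℂ) → ℂ} 
    (hper : Per d g) (hh : ∀ z ∈ strip d D, DifferentiableAt ℂ g z)
    {z : Fin d → ℂ} (hz : z ∈ strip d D) (hs : Summable (cf g z)) (x : Fin d → ℝ) :
    HasSum (fun k => cf g z k * UnitAddTorus.mFourier k (qmap x))
      (g (fun i => 2 * π * (x i : ℂ) + z i)) := by
  have hc : Continuous (Lf g z) := Lf_continuous hper (fun z hz => (hh z hz).continuousAt) hz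
  have := UnitAddTorus.hasSum_mFourier_series_apply_of_summable (f := ⟨Lf g z, hc⟩) hs (qmap x)
  simpa [Lf_qmap hper] using this

lemma hasSum_series {d : ℕ} {D D1 D2 M : ℝ} {g : (Fin d → ℂ) → ℂ} (hD0 : 0 ≤ D1) (hD : D1 < D)
    (hD2 : D2 < D1) (hper : Per d g) (hh : ∀ z ∈ strip d D, DifferentiableAt ℂ g z)
    (hM : ∀ z ∈ strip d D, ‖g z‖ ≤ M) {z : Fin d → ℂ} (hz : z ∈ strip d D2) :
    HasSum (fun k => cf g 0 k * expk k z) (g z) := by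
  have h1 : cf g z = fun k => cf g 0 k * expk k z := by
    funext k
    rw [cf_shift hD0 hD hper hh hM k (fun i => (hz i).trans hD2.le), mul_comm]
  have hs : Summable (cf g z) := by
    rw [h1]
    refine Summable.of_norm_bounded
      ((summable_pi_exp (D1 - D2) (by linarith) d).mul_left M) fun k => ?_
    rw [norm_mul]
    exact cf_bound hD0 hD hper hh hM k hz
  have := hasSum_of_cf hper hh (fun i => (hz i).trans (by linarith)) hs 0
  rw [h1] at this
  simpa [mFourier_qmap, expk] using this

lemma cf_zero {d : ℕ} (g : (Fin d → ℂ) → ℂ) (z : Fin d → ℂ) :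
    cf g z 0 = ∫ x, Lf g z x ∂(muT d) := by
  rw [cf_eq]
  simp [UnitAddTorus.mFourier_zero]

lemma poly_exp (τ e : ℝ) (he : 0 < e) :
    ∃ C : ℝ, 0 ≤ C ∧ ∀ S : ℝ, 1 ≤ S → S ^ τ * S ≤ C * Real.exp (e * S) := by
  obtain ⟨N, hN⟩ := exists_nat_ge τ
  refine ⟨(N + 1).factorial / e ^ (N + 1), by positivity, fun S hS => ?_⟩
  have h0 : 0 ≤ S := by linarith
  have h1 : S ^ τ * S ≤ S ^ (N + 1) := by
    rw [pow_succ]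
    refine mul_le_mul_of_nonneg_right ?_ h0
    rw [← Real.rpow_natCast]
    exact Real.rpow_le_rpow_of_exponent_le hS hN
  have h2 := Real.pow_div_factorial_le_exp (e * S) (by positivity) (N + 1)
  refine h1.trans ?_
  rw [div_mul_eq_mul_div, le_div_iff₀ (by positivity)]
  rw [div_le_iff₀ (by positivity), mul_pow] at h2
  linarith

lemma knorm_le {d : ℕ} (k : Fin d → ℤ) :
    ‖(fun i => (k i : ℝ) : Fin d → ℝ)‖ ≤ ∑ i, |(k i : ℝ)| := by
  refine (pi_norm_le_iff_of_nonneg (Finset.sum_nonneg fun i _ => abs_nonneg _)).2 fun i => ?_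
  exact Finset.single_le_sum (f := fun i => |(k i : ℝ)|) (fun i _ => abs_nonneg _)
    (Finset.mem_univ i)

lemma one_le_sum {d : ℕ} (k : Fin d → ℤ) (hk : k ≠ 0) : 1 ≤ ∑ i, |(k i : ℝ)| := by
  obtain ⟨i, hi⟩ := Function.ne_iff.1 hk
  have h1 : (1 : ℝ) ≤ |(k i : ℝ)| := by
    exact_mod_cast Int.one_le_abs hi
  exact h1.trans (Finset.single_le_sum (f := fun i => |(k i : ℝ)|) (fun i _ => abs_nonneg _)
    (Finset.mem_univ i))

lemma linK_norm {d : ℕ} (k : Fin d → ℤ) : ‖linK k‖ ≤ ∑ i, |(k i : ℝ)| := by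
  refine ContinuousLinearMap.opNorm_le_bound _ (Finset.sum_nonneg fun i _ => abs_nonneg _)
    fun z => ?_
  rw [linK_apply, norm_mul, Complex.norm_I, one_mul, Finset.sum_mul]
  refine (norm_sum_le _ _).trans (Finset.sum_le_sum fun i _ => ?_)
  rw [norm_mul]
  simp only [Complex.norm_intCast]
  exact mul_le_mul_of_nonneg_left (norm_le_pi_norm z i) (abs_nonneg _)

lemma omega_ne {d : ℕ} {c τ : ℝ} (hc : 0 < c) {ω : Fin d → ℝ}
    (hω : ∀ k : Fin d → ℤ, k ≠ 0 →
      c / ‖(fun i => (k i : ℝ) : Fin d → ℝ)‖ ^ τ ≤ |∑ i, ω i * (k i : ℝ)|)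
    (k : Fin d → ℤ) (hk : k ≠ 0) : 0 < ‖(fun i => (k i : ℝ) : Fin d → ℝ)‖ ∧
      0 < |∑ i, ω i * (k i : ℝ)| := by
  have h1 : 0 < ‖(fun i => (k i : ℝ) : Fin d → ℝ)‖ := by
    rw [norm_pos_iff]
    intro h
    apply hk
    funext i
    have h2 : (k i : ℝ) = 0 := congrFun h i
    exact_mod_cast h2
  exact ⟨h1, lt_of_lt_of_le (by positivity) (hω k hk)⟩

lemma exists_sol (d : ℕ) (c τ Δ δ : ℝ) (hc : 0 < c) (hτ : 0 ≤ τ)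
    (hδ : 0 < δ) (hδΔ : δ < Δ)
    (ω : Fin d → ℝ)
    (hω : ∀ k : Fin d → ℤ, k ≠ 0 →
      c / ‖(fun i => (k i : ℝ) : Fin d → ℝ)‖ ^ τ ≤ |∑ i, ω i * (k i : ℝ)|)
    (g : (Fin d → ℂ) → ℂ)
    (hg_hol : ∀ z ∈ strip d Δ, DifferentiableAt ℂ g z)
    (hg_per : Per d g)
    (M : ℝ) (hM : ∀ z ∈ strip d Δ, ‖g z‖ ≤ M)
    (hg_avg : ZeroAvg d g) :
    ∃ f : (Fin d → ℂ) → ℂ, IsSol d (Δ - δ) ω g f := by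
  set D1 := Δ - δ / 3 with hD1
  set D2 := Δ - 2 * δ / 3 with hD2
  have hM0 : 0 ≤ M := (norm_nonneg _).trans (hM 0 (zero_strip (by linarith)))
  have hcf0 : cf g 0 0 = 0 := by rw [cf_zero, integral_Lf hg_per hg_avg]
  set a : (Fin d → ℤ) → ℂ := fun k => cf g 0 k / (I * (∑ i, ω i * (k i : ℝ) : ℝ)) with ha
  have ha0 : a 0 = 0 := by simp [ha, hcf0]
  have ham : ∀ k, a k * (I * (∑ i, ω i * (k i : ℝ) : ℝ)) = cf g 0 k := by
    intro k
    by_cases hk : k = 0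
    · subst hk; rw [ha0, hcf0, zero_mul]
    · refine div_mul_cancel₀ _ ?_
      have := abs_pos.1 (omega_ne hc hω k hk).2
      exact mul_ne_zero Complex.I_ne_zero (by exact_mod_cast this)
  set e := δ / 6 with he
  have he0 : 0 < e := by rw [he]; positivity
  obtain ⟨C, hC0, hC⟩ := poly_exp τ e he0
  set u : (Fin d → ℤ) → ℝ := fun k => M / c * C * Real.exp (-(e * ∑ i, |(k i : ℝ)|)) with hu
  have hus : Summable u := (summable_pi_exp e he0 d).mul_left _
  have hu0 : ∀ k, 0 ≤ u k := fun k => by simp only [hu]; positivity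
  have hbound : ∀ k, ∀ z ∈ strip d D2, ‖a k‖ * ‖expk k z‖ * ∑ i, |(k i : ℝ)| ≤ u k := by
    intro k z hz
    by_cases hk : k = 0
    · subst hk; rw [ha0]; simpa using hu0 0
    obtain ⟨hk1, hk2⟩ := omega_ne hc hω k hk
    have hS := one_le_sum k hk
    have h1 := cf_bound (D1 := D1) (D2 := D2) (by rw [hD1]; linarith) (by rw [hD1]; linarith)
      hg_per hg_hol hM k hz
    have h2 := hC _ hS
    set S := ∑ i, |(k i : ℝ)| with hSdef
    set W := |∑ i, ω i * (k i : ℝ)| with hW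
    have h3 : 1 / W ≤ S ^ τ / c := by
      have h4 := hω k hk
      rw [div_le_iff₀ (by positivity)] at h4
      rw [div_le_div_iff₀ hk2 hc]
      have h5 : ‖(fun i => (k i : ℝ) : Fin d → ℝ)‖ ^ τ ≤ S ^ τ :=
        Real.rpow_le_rpow (norm_nonneg _) (knorm_le k) hτ
      nlinarith
    have h4 : ‖a k‖ = ‖cf g 0 k‖ * (1 / W) := by
      simp only [ha]
      rw [norm_div, norm_mul, Complex.norm_I, one_mul, Complex.norm_real, Real.norm_eq_abs]
      ring
    have hSt : 0 ≤ S ^ τ := by positivity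
    calc ‖a k‖ * ‖expk k z‖ * S = (‖cf g 0 k‖ * ‖expk k z‖) * ((1 / W) * S) := by rw [h4]; ring
      _ ≤ (M * Real.exp (-((D1 - D2) * S))) * ((S ^ τ / c) * S) := by
          gcongr
      _ = (M / c * Real.exp (-((D1 - D2) * S))) * (S ^ τ * S) := by ring
      _ ≤ (M / c * Real.exp (-((D1 - D2) * S))) * (C * Real.exp (e * S)) := by gcongr
      _ = M / c * C * (Real.exp (-((D1 - D2) * S)) * Real.exp (e * S)) := by ring
      _ = u k := by
          rw [← Real.exp_add]
          simp only [hu, hD1, hD2, he]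
          congr 2
          ring
  have hbound' : ∀ k, ∀ z ∈ strip d D2, ‖a k‖ * ‖expk k z‖ ≤ u k := by
    intro k z hz
    by_cases hk : k = 0
    · subst hk; rw [ha0]; simpa using hu0 0
    refine le_trans ?_ (hbound k z hz)
    exact le_mul_of_one_le_right (by positivity) (one_le_sum k hk)
  set s := interior (strip d D2) with hs
  have hsub : ∀ z ∈ strip d (Δ - δ), z ∈ s := by
    intro z hz
    rw [hs, mem_interior_iff_mem_nhds]
    refine Filter.mem_of_superset (Metric.ball_mem_nhds z (ε := D2 - (Δ - δ)) ?_)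
      fun w hw => ball_strip hz hw
    rw [hD2]; linarith
  have hf'bound : ∀ k, ∀ z ∈ s, ‖a k • (expk k z • linK k)‖ ≤ u k := by
    intro k z hz
    rw [norm_smul, norm_smul, ← mul_assoc]
    refine le_trans ?_ (hbound k z (interior_subset hz))
    exact mul_le_mul_of_nonneg_left (linK_norm k) (by positivity)
  have hzs : (0 : Fin d → ℂ) ∈ s := hsub 0 (zero_strip (by linarith))
  have hder : ∀ z ∈ s, HasFDerivAt (fun z => ∑' k, a k * expk k z)
      (∑' k, a k • (expk k z • linK k)) z := by
    intro z hz
    refine hasFDerivAt_tsum_of_isPreconnected (u := u) (s := s) hus isOpen_interior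
      (strip_convex.interior).isPreconnected (fun k z _ => ?_) hf'bound hzs ?_ hz
    · exact (expk_hasFDerivAt k z).const_mul (a k)
    · refine Summable.of_norm_bounded hus fun k => ?_
      rw [norm_mul]
      exact hbound' k 0 (interior_subset hzs)
  have hper0 : Per d (fun z => ∑' k, a k * expk k z) := by
    intro z m
    simp only [expk_per _ z m]
  set f0 : (Fin d → ℂ) → ℂ := fun z => ∑' k, a k * expk k z with hf0
  set B := Set.Icc (0 : Fin d → ℝ) (fun _ => 2 * π) with hB
  set A : ℂ := (∫ θ in B, f0 (fun i => (θ i : ℂ))) / (volume.real B : ℝ) with hA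
  refine ⟨fun z => f0 z - A, ?_, ?_, ?_, ?_⟩
  · intro z hz
    exact (hder z (hsub z hz)).differentiableAt.sub_const A
  · intro z m
    simp only [hper0 z m]
  · unfold ZeroAvg
    have hvol : volume.real B ≠ 0 := by
      rw [hB, measureReal_def, Real.volume_Icc_pi]
      simp [Real.pi_ne_zero, Real.pi_pos.le]
    have hintg : IntegrableOn (fun θ : Fin d → ℝ => f0 (fun i => (θ i : ℂ))) B := by
      refine ContinuousOn.integrableOn_compact isCompact_Icc fun θ _ => ?_
      refine ContinuousAt.continuousWithinAt ?_
      refine ContinuousAt.comp (f := fun s : Fin d → ℝ => fun i => (s i : ℂ)) (g := f0) ?_ ?_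
      · refine (hder _ (hsub _ ?_)).continuousAt
        intro i
        simp
        linarith
      · exact Continuous.continuousAt (continuous_pi fun i =>
          Complex.continuous_ofReal.comp (continuous_apply i))
    rw [integral_sub hintg (integrableOn_const isCompact_Icc.measure_lt_top.ne)]
    rw [setIntegral_const, hA, Complex.real_smul]
    rw [mul_div_cancel₀ _ (by exact_mod_cast hvol), sub_self]
  · intro z hz
    have h1 := (hder z (hsub z hz)).sub_const A
    rw [h1.fderiv]
    have hsum : Summable fun k => a k • (expk k z • linK k) :=
      Summable.of_norm_bounded hus fun k => hf'bound k z (hsub z hz)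
    have h2 := hsum.hasSum.mapL (ContinuousLinearMap.apply ℂ ℂ (fun i => (ω i : ℂ)))
    refine h2.unique ?_
    have h3 := hasSum_series (D1 := D1) (D2 := D2) (by rw [hD1]; linarith) (by rw [hD1]; linarith)
      (by rw [hD1, hD2]; linarith) hg_per hg_hol hM (interior_subset (hsub z hz))
    refine h3.congr_fun fun k => ?_
    rw [← ham k]
    simp only [ContinuousLinearMap.apply_apply, smul_apply, linK_apply, smul_eq_mul]
    push_cast
    simp_rw [mul_comm (ω _ : ℂ)]
    ring

lemma sol_unique_zero (d : ℕ) (D : ℝ) (hD : 0 ≤ D) (ω : Fin d → ℝ)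
    (hω : ∀ k : Fin d → ℤ, k ≠ 0 → ∑ i, ω i * (k i : ℝ) ≠ 0)
    (v : (Fin d → ℂ) → ℂ) (hv : ∀ z ∈ strip d D, DifferentiableAt ℂ v z) (hper : Per d v)
    (h0 : ∫ x, Lf v 0 x ∂(muT d) = 0)
    (hL : ∀ z ∈ strip d D, fderiv ℂ v z (fun i => (ω i : ℂ)) = 0) :
    ∀ z ∈ strip d D, v z = 0 := by
  have hline : ∀ z ∈ strip d D, ∀ t : ℝ, v (fun i => t * ω i + z i) = v z := by
    intro z hz t
    have hmem : ∀ t : ℝ, (fun i => (t : ℂ) * ω i + z i) ∈ strip d D := by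
      intro t i
      simpa using hz i
    have h1 : ∀ t : ℝ, HasDerivAt (fun t : ℝ => v (fun i => t * ω i + z i)) 0 t := by
      intro t
      have h2 := (hv _ (hmem t)).hasFDerivAt
      have h3 : HasDerivAt (fun t : ℝ => (fun i => (t : ℂ) * ω i + z i)) (fun i => (ω i : ℂ)) t := by
        rw [hasDerivAt_pi]
        intro i
        simpa using ((Complex.ofRealCLM.hasDerivAt (x := t)).mul_const (ω i : ℂ)).add_const (z i)
      have h4 := (h2.restrictScalars ℝ).comp_hasDerivAt t h3
      simpa [hL _ (hmem t), Function.comp_def] using h4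
    have h5 := is_const_of_deriv_eq_zero (fun t => (h1 t).differentiableAt)
      (fun t => (h1 t).deriv) t 0
    simpa using h5
  have hcf : ∀ z ∈ strip d D, ∀ k, k ≠ 0 → cf v z k = 0 := by
    intro z hz k hk
    obtain ⟨W, hW⟩ : ∃ W, W = ∑ i, ω i * (k i : ℝ) := ⟨_, rfl⟩
    have hW0 : W ≠ 0 := hW ▸ hω k hk
    set s : Fin d → ℝ := fun i => ω i / (2 * W) with hs
    have h1 : cf v z k = UnitAddTorus.mFourier (-k) (qmap s) * cf v z k := by
      conv_lhs => rw [cf_eq, ← integral_add_right_eq_self _ (qmap s)]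
      rw [cf_eq, ← integral_const_mul]
      congr 1
      funext x
      have h2 : Lf v z (x + qmap s) = Lf v z x := by
        rw [Lf_add hper]
        unfold Lf
        rw [← hline _ (strip_add_real hz (rep x)) (π / W)]
        congr 1
        funext i
        simp only [hs]
        push_cast
        have : (W : ℂ) ≠ 0 := by exact_mod_cast hW0
        field_simp
        ring
      have h3 : UnitAddTorus.mFourier (-k) (x + qmap s) =
          UnitAddTorus.mFourier (-k) x * UnitAddTorus.mFourier (-k) (qmap s) := by
        conv_lhs => rw [← qmap_rep x]
        have : qmap (rep x) + qmap s = qmap (fun i => rep x i + s i) := by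
          funext i
          simp [qmap]
        rw [this, mFourier_qmap, mFourier_eq, mFourier_qmap, ← expk_add]
        congr 1
        funext i
        push_cast
        ring
      rw [h2, h3]
      ring
    have h4 : UnitAddTorus.mFourier (-k) (qmap s) = -1 := by
      rw [mFourier_qmap]
      unfold expk
      have : I * ∑ i, (((-k) i : ℤ) : ℂ) * (2 * π * (s i : ℂ)) = -(π * I) := by
        have h5 : ∑ i, (((-k) i : ℤ) : ℂ) * (2 * π * (s i : ℂ)) = 
            ((-(π / W) * ∑ i, ω i * (k i : ℝ) : ℝ) : ℂ) := by
          rw [Finset.mul_sum]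
          push_cast
          apply Finset.sum_congr rfl
          intro i _
          simp only [hs, Pi.neg_apply]
          push_cast
          have h6 : (W : ℂ) ≠ 0 := by exact_mod_cast hW0
          field_simp
        rw [h5, ← hW]
        have : -(π / W) * W = -π := by field_simp
        rw [this]
        push_cast
        ring
      rw [this, Complex.exp_neg, Complex.exp_pi_mul_I]
      norm_num
    rw [h4] at h1
    linear_combination h1 / 2
  have hval : ∀ z ∈ strip d D, ∀ x : Fin d → ℝ,
      v (fun i => 2 * π * (x i : ℂ) + z i) = cf v z 0 := by
    intro z hz x
    have hs : Summable (cf v z) := by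
      refine summable_of_ne_finset_zero (s := {0}) fun k hk => hcf z hz k (by simpa using hk)
    have h1 := hasSum_of_cf hper hv hz hs x
    have h2 := hasSum_single (f := fun k => cf v z k * UnitAddTorus.mFourier k (qmap x)) 0
      (fun k hk => by simp only [hcf z hz k hk, zero_mul])
    rw [h1.unique h2]
    simp [UnitAddTorus.mFourier_zero]
  have hval0 : ∀ z ∈ strip d D, v z = cf v z 0 := by
    intro z hz
    simpa using hval z hz 0
  intro z hz
  rw [const_of_invariant hv (fun z hz s => by rw [hval z hz, hval0 z hz]) z hz 0 (zero_strip hD),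
    hval0 0 (zero_strip hD), cf_zero, h0]

/-- **Fundamental lemma (existence and uniqueness).** -/
theorem stmt0 (d : ℕ) (hd : 1 ≤ d) (c τ Δ δ : ℝ) (hc : 0 < c) (hτ : (d : ℝ) - 1 < τ)
    (hδ : 0 < δ) (hδΔ : δ < Δ)
    (ω : Fin d → ℝ)
    (hω : ∀ k : Fin d → ℤ, k ≠ 0 →
      c / ‖(fun i => (k i : ℝ) : Fin d → ℝ)‖ ^ τ ≤ |∑ i, ω i * (k i : ℝ)|)
    (g : (Fin d → ℂ) → ℂ)
    (hg_hol : ∀ z ∈ strip d Δ, DifferentiableAt ℂ g z)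
    (hg_per : Per d g)
    (hg_bdd : ∃ M : ℝ, ∀ z ∈ strip d Δ, ‖g z‖ ≤ M)
    (hg_avg : ZeroAvg d g) :
    ∃ f : (Fin d → ℂ) → ℂ, IsSol d (Δ - δ) ω g f ∧
      ∀ f' : (Fin d → ℂ) → ℂ, IsSol d (Δ - δ) ω g f' →
        Set.EqOn f f' (strip d (Δ - δ)) := by
  obtain ⟨M, hM⟩ := hg_bdd
  have hd' : (1 : ℝ) ≤ d := by exact_mod_cast hd
  obtain ⟨f, hf⟩ := exists_sol d c τ Δ δ hc (by linarith) hδ hδΔ ω hω g hg_hol hg_per M hM hg_avg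
  refine ⟨f, hf, fun f' hf' => ?_⟩
  have hD : 0 ≤ Δ - δ := by linarith
  have hintg : ∀ h, IsSol d (Δ - δ) ω g h → Integrable (Lf h 0) (muT d) := fun h hh =>
    (Lf_continuous hh.2.1 (fun z hz => (hh.1 z hz).continuousAt)
      (zero_strip hD)).integrable_of_hasCompactSupport (HasCompactSupport.of_compactSpace _)
  have key := sol_unique_zero d (Δ - δ) hD ω (fun k hk => abs_pos.1 (omega_ne hc hω k hk).2)
    (fun z => f z - f' z) (fun z hz => (hf.1 z hz).sub (hf'.1 z hz))
    (fun z m => by simp only [hf.2.1 z m, hf'.2.1 z m])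
    (by
      have : Lf (fun z => f z - f' z) 0 = fun x => Lf f 0 x - Lf f' 0 x := rfl
      rw [this, integral_sub (hintg f hf) (hintg f' hf'), integral_Lf hf.2.1 hf.2.2.1,
        integral_Lf hf'.2.1 hf'.2.2.1, sub_zero])
    (fun z hz => by
      rw [fderiv_fun_sub (hf.1 z hz) (hf'.1 z hz)]
      simp [hf.2.2.2 z hz, hf'.2.2.2 z hz])
  intro z hz
  exact sub_eq_zero.1 (key z hz)
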